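/- Let N, m, k be positive integers with N/2 < k ≤ N. Let S_1,…,S_N be datasets of m labelled points each, let G ⊆ [N] with |G| = k, and let D be a distribution on X×Y with risk functional R. Suppose σ_1,…,σ_N ≥ 0 and σ_G ≥ 0 are reals such that sup_{h∈H} |R(h) − R̂_{S_i}(h)| ≤ σ_i for every i ∈ G, and sup_{h∈H} |R(h) − R̂_{S_G}(h)| ≤ σ_G, where S_G = ∪_{i∈G} S_i. Define T = { i ∈ [N] : d_H(S_i, S_j) ≤ σ_i + σ_j for at least ⌊N/2⌋ indices j ≠ i }. Then G ⊆ T, and the average empirical risk R̂_T(h) = (1/|T|)Σ_{i∈T} R̂_{S_i}(h) satisfies sup_{h∈H} |R̂_T(h) − R(h)| ≤ σ_G + 3·((N−k)/N)·max_{i∈[N]} σ_i. -/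

import Mathlib

open MeasureTheory
open scoped Classical

noncomputable section

variable {X Y : Type*}

/-- The risk (expected loss) of a hypothesis `h` under the distribution `D`. -/
def risk [MeasurableSpace X] [MeasurableSpace Y] (D : Measure (X × Y)) (ℓ : Y → Y → ℝ)
    (h : X → Y) : ℝ :=
  ∫ z, ℓ (h z.1) z.2 ∂D

/-- The empirical risk of `h` on a finite dataset (multiset) `S`. -/
def empRisk (ℓ : Y → Y → ℝ) (S : Multiset (X × Y)) (h : X → Y) : ℝ :=
  (S.map fun z => ℓ (h z.1) z.2).sum / S.card

/-- The multiset of points of a dataset given as a finite tuple. -/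
def toMulti {n : ℕ} (S : Fin n → X × Y) : Multiset (X × Y) :=
  Finset.univ.val.map S

/-- The union of the datasets indexed by `G`. -/
def unionG {N m : ℕ} (S : Fin N → Fin m → X × Y) (G : Finset (Fin N)) : Multiset (X × Y) :=
  ∑ i ∈ G, toMulti (S i)

/-!
Sources in `G` agree with each other up to `σ i + σ j`, since both agree with the true risk; as they
form a majority, each of them passes the test. Conversely, a source `i` outside `G` that passes the
test agrees with about half of the others, hence with some `j ∈ G`, so its risk is within
`σ i + 2 σ j ≤ 3 max σ` of the true one. Such sources make up a fraction at most `(N - k) / N` of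
the trusted ones, while the sources in `G`, being of equal size, average to the pooled risk, which
is within `σ_G` of the true one.
-/

section Averaging

open Finset
open scoped BigOperators

variable {ι : Type*} {G T U : Finset ι} {f : ι → ℝ} {r a b : ℝ}

theorem card_mul_expect_sub (s : Finset ι) (f : ι → ℝ) (r : ℝ) :
    #s * (𝔼 i ∈ s, f i - r) = ∑ i ∈ s, (f i - r) := by
  rw [mul_sub, card_mul_expect, sum_sub_distrib, sum_const, nsmul_eq_mul]

theorem card_mul_abs_expect_sub_le [DecidableEq ι] (hGT : G ⊆ T) (hG : |𝔼 i ∈ G, f i - r| ≤ a)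
    (hb : ∀ i ∈ T \ G, |f i - r| ≤ b) :
    #T * |𝔼 i ∈ T, f i - r| ≤ #G * a + #(T \ G) * b :=
  calc
    #T * |𝔼 i ∈ T, f i - r| = |∑ i ∈ G, (f i - r) + ∑ i ∈ T \ G, (f i - r)| := by
      rw [add_comm, sum_sdiff hGT, ← card_mul_expect_sub, abs_mul, Nat.abs_cast]
    _ ≤ |∑ i ∈ G, (f i - r)| + ∑ i ∈ T \ G, |f i - r| :=
      (abs_add_le _ _).trans (by gcongr; exact abs_sum_le_sum_abs _ _)
    _ = #G * |𝔼 i ∈ G, f i - r| + ∑ i ∈ T \ G, |f i - r| := by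
      rw [← card_mul_expect_sub, abs_mul, Nat.abs_cast]
    _ ≤ #G * a + #(T \ G) * b := by
      gcongr
      simpa only [nsmul_eq_mul] using sum_le_card_nsmul _ _ _ hb

theorem abs_expect_sub_le_of_subset [DecidableEq ι] (hne : G.Nonempty) (hGT : G ⊆ T) (hTU : T ⊆ U)
    (hG : |𝔼 i ∈ G, f i - r| ≤ a) (hb₀ : 0 ≤ b) (hb : ∀ i ∈ T \ G, |f i - r| ≤ b) :
    |𝔼 i ∈ T, f i - r| ≤ a + (#U - #G) / #U * b := by
  have ha₀ : 0 ≤ a := (abs_nonneg _).trans hG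
  have hT₀ : (0 : ℝ) < #T := by exact_mod_cast (hne.mono hGT).card_pos
  have hU₀ : (0 : ℝ) < #U := by exact_mod_cast ((hne.mono hGT).mono hTU).card_pos
  have hGT_card : (#G : ℝ) ≤ #T := by exact_mod_cast card_le_card hGT
  have hTU_card : (#T : ℝ) ≤ #U := by exact_mod_cast card_le_card hTU
  have hfrac : (#(T \ G) : ℝ) ≤ #T * ((#U - #G) / #U) := by
    rw [cast_card_sdiff hGT, mul_div_assoc', le_div_iff₀ hU₀]
    linear_combination (#G : ℝ) * hTU_card
  refine le_of_mul_le_mul_left ?_ hT₀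
  calc
    #T * |𝔼 i ∈ T, f i - r| ≤ #G * a + #(T \ G) * b := card_mul_abs_expect_sub_le hGT hG hb
    _ ≤ #T * a + #T * ((#U - #G) / #U) * b := by gcongr
    _ = #T * (a + (#U - #G) / #U * b) := by ring

theorem empRisk_sum_eq_expect {n : ℕ} (ℓ : Y → Y → ℝ) (s : Finset ι) (S : ι → Multiset (X × Y))
    (hS : ∀ i ∈ s, (S i).card = n) (h : X → Y) :
    empRisk ℓ (∑ i ∈ s, S i) h = 𝔼 i ∈ s, empRisk ℓ (S i) h := by
  let loss : X × Y → ℝ := fun z => ℓ (h z.1) z.2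
  have hcard : (∑ i ∈ s, S i).card = #s * n := by
    rw [Multiset.card_sum, sum_congr rfl hS, sum_const, smul_eq_mul]
  have hsum : ((∑ i ∈ s, S i).map loss).sum = ∑ i ∈ s, ((S i).map loss).sum :=
    map_sum (Multiset.sumAddMonoidHom.comp (Multiset.mapAddMonoidHom loss)) S s
  calc
    empRisk ℓ (∑ i ∈ s, S i) h = (∑ i ∈ s, ((S i).map loss).sum / n) / #s := by
      rw [empRisk, hsum, hcard, ← sum_div, div_div, mul_comm, Nat.cast_mul]
    _ = (∑ i ∈ s, empRisk ℓ (S i) h) / #s := by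
      congr 1
      exact sum_congr rfl fun i hi => by rw [empRisk, hS i hi]
    _ = 𝔼 i ∈ s, empRisk ℓ (S i) h := (expect_eq_sum_div_card _ _).symm

theorem empRisk_unionG {N m : ℕ} (ℓ : Y → Y → ℝ) (S : Fin N → Fin m → X × Y) (G : Finset (Fin N))
    (h : X → Y) : empRisk ℓ (unionG S G) h = 𝔼 i ∈ G, empRisk ℓ (toMulti (S i)) h :=
  empRisk_sum_eq_expect (n := m) ℓ G (fun i => toMulti (S i)) (fun i _ => by simp [toMulti]) h

end Averaging

section Filtering

open Finset
open scoped BigOperators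

variable {α : Type*} {H : Set α} {u v w : α → ℝ} {ε δ : ℝ}

/-- The discrepancy `sup_{h ∈ H} |u h - v h|` of two risk functionals is at most `ε`. It is stated
pointwise because a real supremum is `0` when the set is unbounded. -/
def DiscrepancyLE (H : Set α) (u v : α → ℝ) (ε : ℝ) : Prop :=
  ∀ h ∈ H, |u h - v h| ≤ ε

theorem DiscrepancyLE.symm (huv : DiscrepancyLE H u v ε) : DiscrepancyLE H v u ε := fun h hh => by
  rw [abs_sub_comm]
  exact huv h hh

theorem DiscrepancyLE.trans (huv : DiscrepancyLE H u v ε) (hvw : DiscrepancyLE H v w δ) :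
    DiscrepancyLE H u w (ε + δ) := fun h hh =>
  (abs_sub_le _ (v h) _).trans (add_le_add (huv h hh) (hvw h hh))

variable {ι : Type*} [Fintype ι] [DecidableEq ι] {f : ι → α → ℝ} {R : α → ℝ} {G : Finset ι}
  {σ : ι → ℝ} {σG : ℝ} {i : ι}

/-- The sources `j ≠ i` whose risk functional `f j` has discrepancy at most `σ i + σ j` from that
of the source `i`. -/
def compatibleSources (H : Set α) (f : ι → α → ℝ) (σ : ι → ℝ) (i : ι) : Finset ι :=
  univ.filter fun j => j ≠ i ∧ DiscrepancyLE H (f i) (f j) (σ i + σ j)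

/-- The set `T` selected by discrepancy-based filtering: among `N` sources, those compatible with at
least `⌊N / 2⌋` others. -/
def trustedSources (H : Set α) (f : ι → α → ℝ) (σ : ι → ℝ) : Finset ι :=
  univ.filter fun i => Fintype.card ι / 2 ≤ #(compatibleSources H f σ i)

theorem erase_subset_compatibleSources (hconc : ∀ i ∈ G, DiscrepancyLE H R (f i) (σ i))
    (hi : i ∈ G) : G.erase i ⊆ compatibleSources H f σ i := fun j hj => by
  obtain ⟨hji, hjG⟩ := mem_erase.1 hj
  exact mem_filter.2 ⟨mem_univ j, hji, (hconc i hi).symm.trans (hconc j hjG)⟩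

theorem subset_trustedSources (hmaj : Fintype.card ι / 2 < #G)
    (hconc : ∀ i ∈ G, DiscrepancyLE H R (f i) (σ i)) : G ⊆ trustedSources H f σ := fun i hi => by
  refine mem_filter.2 ⟨mem_univ i, ?_⟩
  calc
    Fintype.card ι / 2 ≤ #(G.erase i) := by
      rw [card_erase_of_mem hi]
      exact Nat.le_sub_one_of_lt hmaj
    _ ≤ #(compatibleSources H f σ i) := card_le_card (erase_subset_compatibleSources hconc hi)

-- Pigeonhole in `univ.erase i`, which contains both `G` and the sources compatible with `i`.
theorem exists_discrepancyLE_of_mem_trustedSources (hmaj : Fintype.card ι < 2 * #G)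
    (hi : i ∈ trustedSources H f σ) (hiG : i ∉ G) :
    ∃ j ∈ G, DiscrepancyLE H (f i) (f j) (σ i + σ j) := by
  have hcompat : Fintype.card ι / 2 ≤ #(compatibleSources H f σ i) := (mem_filter.1 hi).2
  have hcard : #(univ.erase i) < #(compatibleSources H f σ i) + #G := by
    rw [card_erase_of_mem (mem_univ i), card_univ]
    omega
  obtain ⟨j, hj⟩ := inter_nonempty_of_card_lt_card_add_card
    (fun j hj => mem_erase.2 ⟨(mem_filter.1 hj).2.1, mem_univ j⟩)
    (fun j hj => mem_erase.2 ⟨ne_of_mem_of_not_mem hj hiG, mem_univ j⟩) hcard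
  obtain ⟨hj_compat, hjG⟩ := mem_inter.1 hj
  exact ⟨j, hjG, (mem_filter.1 hj_compat).2.2⟩

theorem discrepancyLE_of_mem_trustedSources (hmaj : Fintype.card ι < 2 * #G)
    (hconc : ∀ i ∈ G, DiscrepancyLE H R (f i) (σ i)) (hi : i ∈ trustedSources H f σ) (hiG : i ∉ G) :
    DiscrepancyLE H (f i) R (3 * ⨆ i, σ i) := fun h hh => by
  obtain ⟨j, hjG, hij⟩ := exists_discrepancyLE_of_mem_trustedSources hmaj hi hiG
  have hle_sup (i : ι) : σ i ≤ ⨆ i, σ i := le_ciSup (Set.finite_range σ).bddAbove i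
  calc
    |f i h - R h| ≤ σ i + σ j + σ j := hij.trans (hconc j hjG).symm h hh
    _ ≤ 3 * ⨆ i, σ i := by linarith [hle_sup i, hle_sup j]

theorem discrepancy_filtering_deterministic_general (hmaj : Fintype.card ι < 2 * #G)
    (hconc : ∀ i ∈ G, DiscrepancyLE H R (f i) (σ i))
    (hconcG : DiscrepancyLE H R (fun h => 𝔼 i ∈ G, f i h) σG) :
    G ⊆ trustedSources H f σ ∧
      DiscrepancyLE H (fun h => 𝔼 i ∈ trustedSources H f σ, f i h) R
        (σG + 3 * (((Fintype.card ι : ℝ) - #G) / Fintype.card ι) * ⨆ i, σ i) := by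
  have hGT : G ⊆ trustedSources H f σ := subset_trustedSources (by omega) hconc
  refine ⟨hGT, fun h hh => ?_⟩
  obtain ⟨j, hjG⟩ : G.Nonempty := card_pos.1 (by omega)
  have hsup₀ : 0 ≤ ⨆ i, σ i :=
    (abs_nonneg _).trans ((hconc j hjG h hh).trans (le_ciSup (Set.finite_range σ).bddAbove j))
  have hout (i : ι) (hi : i ∈ trustedSources H f σ \ G) : |f i h - R h| ≤ 3 * ⨆ i, σ i :=
    discrepancyLE_of_mem_trustedSources hmaj hconc (mem_sdiff.1 hi).1 (mem_sdiff.1 hi).2 h hh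
  calc
    |𝔼 i ∈ trustedSources H f σ, f i h - R h|
        ≤ σG + (#univ - #G) / #univ * (3 * ⨆ i, σ i) :=
      abs_expect_sub_le_of_subset ⟨j, hjG⟩ hGT (subset_univ _) (hconcG.symm h hh)
        (mul_nonneg zero_le_three hsup₀) hout
    _ = σG + 3 * ((Fintype.card ι - #G) / Fintype.card ι) * ⨆ i, σ i := by
      rw [card_univ]
      ring

end Filtering

/-- **Deterministic core of the filtering analysis**: if every source in `G` has uniform
deviation at most `σ i` from the true risk, and the pooled dataset `S_G` has uniform
deviation at most `σ_G`, then the trusted set `T` selected by discrepancy-based filtering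
contains `G`, and the averaged empirical risk over `T` has uniform deviation at most
`σ_G + 3·((N-k)/N)·max_i σ_i` from the true risk. -/
theorem discrepancy_filtering_deterministic
    [MeasurableSpace X] [MeasurableSpace Y]
    (D : Measure (X × Y)) [IsProbabilityMeasure D]
    (ℓ : Y → Y → ℝ) (H : Set (X → Y))
    (N m k : ℕ) (hm : 0 < m) (hk1 : N < 2 * k) (hk2 : k ≤ N)
    (S : Fin N → Fin m → X × Y) (G : Finset (Fin N)) (hG : G.card = k)
    (σ : Fin N → ℝ) (σG : ℝ) (hσ : ∀ i, 0 ≤ σ i) (hσG : 0 ≤ σG)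
    (hconc : ∀ i ∈ G, ∀ h ∈ H, |risk D ℓ h - empRisk ℓ (toMulti (S i)) h| ≤ σ i)
    (hconcG : ∀ h ∈ H, |risk D ℓ h - empRisk ℓ (unionG S G) h| ≤ σG) :
    G ⊆ (Finset.univ.filter fun i : Fin N =>
        N / 2 ≤ (Finset.univ.filter fun j : Fin N => j ≠ i ∧
          ∀ h ∈ H, |empRisk ℓ (toMulti (S i)) h - empRisk ℓ (toMulti (S j)) h| ≤
            σ i + σ j).card) ∧
      ∀ h ∈ H,
        |(∑ i ∈ (Finset.univ.filter fun i : Fin N =>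
              N / 2 ≤ (Finset.univ.filter fun j : Fin N => j ≠ i ∧
                ∀ h' ∈ H, |empRisk ℓ (toMulti (S i)) h' - empRisk ℓ (toMulti (S j)) h'| ≤
                  σ i + σ j).card),
            empRisk ℓ (toMulti (S i)) h) /
            ((Finset.univ.filter fun i : Fin N =>
              N / 2 ≤ (Finset.univ.filter fun j : Fin N => j ≠ i ∧
                ∀ h' ∈ H, |empRisk ℓ (toMulti (S i)) h' - empRisk ℓ (toMulti (S j)) h'| ≤
                  σ i + σ j).card).card : ℝ) -
          risk D ℓ h| ≤
        σG + 3 * (((N : ℝ) - k) / N) * ⨆ i : Fin N, σ i := by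
  subst hG
  simp only [empRisk_unionG] at hconcG
  have hfilter := discrepancy_filtering_deterministic_general (R := risk D ℓ)
    (f := fun i => empRisk ℓ (toMulti (S i))) (by rwa [Fintype.card_fin]) hconc hconcG
  simp only [trustedSources, compatibleSources, DiscrepancyLE, Fintype.card_fin,
    Finset.expect_eq_sum_div_card] at hfilter
  exact hfilter
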